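/- Let Φ be a quantum channel on n×n complex matrices with Kraus operators {K_j}, and suppose there exist orthogonal unit vectors x, x⊥ ∈ ℂⁿ such that Φ(x⊥ x⊥†) Z x = 0 and Φ(x x†) Z x = 0 for every n×n matrix Z in the Hilbert–Schmidt orthogonal complement K_Φ^⊥ of span{K_j}. Then Φ is divisible: there exist quantum channels Φ₁, Φ₂, neither of which is of the form U(·)U† for a unitary U, with Φ = Φ₁ ∘ Φ₂. -/

import Mathlib

open Matrix Kronecker
open scoped ComplexOrder

noncomputable section

/-- The linear map `ρ ↦ A ρ Bᴴ`. -/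
def sandwich₂ {m n : ℕ} (A B : Matrix (Fin m) (Fin n) ℂ) :
    Matrix (Fin n) (Fin n) ℂ →ₗ[ℂ] Matrix (Fin m) (Fin m) ℂ where
  toFun ρ := A * ρ * Bᴴ
  map_add' X Y := by simp [Matrix.mul_add, Matrix.add_mul]
  map_smul' c X := by simp [Matrix.mul_smul, Matrix.smul_mul]

/-- The linear map `ρ ↦ A ρ Aᴴ`. -/
def sandwich {m n : ℕ} (A : Matrix (Fin m) (Fin n) ℂ) :
    Matrix (Fin n) (Fin n) ℂ →ₗ[ℂ] Matrix (Fin m) (Fin m) ℂ :=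
  sandwich₂ A A

/-- The Choi matrix `C(Φ) = ∑ⱼₖ Eⱼₖ ⊗ Φ(Eⱼₖ)`. -/
def Choi {n m : ℕ} (Φ : Matrix (Fin n) (Fin n) ℂ →ₗ[ℂ] Matrix (Fin m) (Fin m) ℂ) :
    Matrix (Fin n × Fin m) (Fin n × Fin m) ℂ :=
  ∑ j : Fin n, ∑ k : Fin n,
    (Matrix.single j k (1 : ℂ)) ⊗ₖ Φ (Matrix.single j k (1 : ℂ))

/-- Vectorization: `vec X = ∑ⱼ eⱼ ⊗ X eⱼ`, i.e. `(vec X) (j, i) = X i j`. -/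
def vec {m n : ℕ} (X : Matrix (Fin m) (Fin n) ℂ) : Fin n × Fin m → ℂ :=
  fun p => X p.2 p.1

/-- Complete positivity (via the Choi characterization). -/
def IsCP {n : ℕ} (Φ : Matrix (Fin n) (Fin n) ℂ →ₗ[ℂ] Matrix (Fin n) (Fin n) ℂ) : Prop :=
  (Choi Φ).PosSemidef

/-- Trace preservation. -/
def IsTP {n : ℕ} (Φ : Matrix (Fin n) (Fin n) ℂ →ₗ[ℂ] Matrix (Fin n) (Fin n) ℂ) : Prop :=
  ∀ ρ, (Φ ρ).trace = ρ.trace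

/-- Quantum channel: completely positive and trace preserving. -/
def IsChannel {n : ℕ} (Φ : Matrix (Fin n) (Fin n) ℂ →ₗ[ℂ] Matrix (Fin n) (Fin n) ℂ) : Prop :=
  IsCP Φ ∧ IsTP Φ

/-- `K_λ = 1 - (1 - √(1-λ)) x x†`. -/
def Kmat {n : ℕ} (lam : ℝ) (x : Fin n → ℂ) : Matrix (Fin n) (Fin n) ℂ :=
  1 - ((1 - Real.sqrt (1 - lam) : ℝ) : ℂ) • Matrix.vecMulVec x (star x)

/-- `L_λ = √λ y x†`. -/
def Lmat {n : ℕ} (lam : ℝ) (x y : Fin n → ℂ) : Matrix (Fin n) (Fin n) ℂ :=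
  ((Real.sqrt lam : ℝ) : ℂ) • Matrix.vecMulVec y (star x)

/-- The elementary channel `Ψ_{λ,x,y} = K_λ (·) K_λ† + L_λ (·) L_λ†`. -/
def Psi {n : ℕ} (lam : ℝ) (x y : Fin n → ℂ) :
    Matrix (Fin n) (Fin n) ℂ →ₗ[ℂ] Matrix (Fin n) (Fin n) ℂ :=
  sandwich (Kmat lam x) + sandwich (Lmat lam x y)

/-- For `λ ∈ [0,1)` and `⟨x,y⟩ = 0`, the inverse of `Ψ_{λ,x,y}`:
`Ψ_{λ,x,y}⁻¹ = K_λ⁻¹ (·) K_λ⁻¹ - (1-λ)⁻¹ L_λ (·) L_λ†`. -/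
def PsiInv {n : ℕ} (lam : ℝ) (x y : Fin n → ℂ) :
    Matrix (Fin n) (Fin n) ℂ →ₗ[ℂ] Matrix (Fin n) (Fin n) ℂ :=
  sandwich (Kmat lam x)⁻¹ - (((1 - lam)⁻¹ : ℝ) : ℂ) • sandwich (Lmat lam x y)

/-- `Φ` is conjugation by a unitary. -/
def IsUnitaryConj {n : ℕ} (Φ : Matrix (Fin n) (Fin n) ℂ →ₗ[ℂ] Matrix (Fin n) (Fin n) ℂ) : Prop :=
  ∃ U ∈ Matrix.unitaryGroup (Fin n) ℂ, ∀ ρ, Φ ρ = U * ρ * Uᴴ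

/-- A quantum channel is divisible if it factors into two channels neither of which is
a unitary conjugation. -/
def Divisible {n : ℕ} (Φ : Matrix (Fin n) (Fin n) ℂ →ₗ[ℂ] Matrix (Fin n) (Fin n) ℂ) : Prop :=
  ∃ Φ₁ Φ₂ : Matrix (Fin n) (Fin n) ℂ →ₗ[ℂ] Matrix (Fin n) (Fin n) ℂ,
    IsChannel Φ₁ ∧ IsChannel Φ₂ ∧ Φ = Φ₁ ∘ₗ Φ₂ ∧ ¬ IsUnitaryConj Φ₁ ∧ ¬ IsUnitaryConj Φ₂

/-- `Z = conj(x) conj(x⊥)† ⊗ 1`. -/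
def Zmat {n : ℕ} (x xp : Fin n → ℂ) : Matrix (Fin n × Fin n) (Fin n × Fin n) ℂ :=
  (Matrix.vecMulVec (star x) xp) ⊗ₖ (1 : Matrix (Fin n) (Fin n) ℂ)

/-!
For orthonormal `x`, `x⊥` the maps `D_a ρ = E ρ E† + (1 - a²) (x⊥ x†) ρ (x⊥ x†)†`, with
`E = 1 + (a - 1) x x†`, are trace preserving and satisfy `D_a ∘ D_b = D_{ab}` and `D_1 = id`; they
are channels for `a² ≤ 1`. Hence `Φ = (Φ ∘ D_a) ∘ D_{1/a}` for `a > 1`, and everything rests on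
`Φ ∘ D_a` being completely positive for some `a > 1`, although `D_a` itself is not.

Since `K_Φ` is its own double orthogonal complement, the hypothesis says that `K_Φ` contains all the
operators `K_j x x†` and `K_j x⊥ x†`. Expanding them in the `K_j` gives
`Φ ∘ D_a = ∑ⱼₖ Gⱼₖ Kⱼ (·) Kₖ†` with a Hermitian matrix `G` that depends continuously on `a` and is
the identity at `a = 1`. So `G` remains positive for `a` slightly larger than `1`.
-/

open scoped Topology

section CompletelyPositive

variable {m n : ℕ}

lemma sandwich_apply (A : Matrix (Fin m) (Fin n) ℂ) (ρ : Matrix (Fin n) (Fin n) ℂ) :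
    sandwich A ρ = A * ρ * Aᴴ := rfl

lemma sandwich_one : sandwich (1 : Matrix (Fin n) (Fin n) ℂ) = LinearMap.id := by
  ext1 ρ
  simp [sandwich_apply]

lemma sandwich_zero : sandwich (0 : Matrix (Fin m) (Fin n) ℂ) = 0 := by
  ext1 ρ
  simp [sandwich_apply]

lemma sandwich_smul (c : ℂ) (A : Matrix (Fin m) (Fin n) ℂ) :
    sandwich (c • A) = (c * star c) • sandwich A := by
  ext1 ρ
  simp [sandwich_apply, smul_smul, mul_comm]

lemma sandwich_comp {l : ℕ} (A : Matrix (Fin l) (Fin m) ℂ) (B : Matrix (Fin m) (Fin n) ℂ) :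
    sandwich A ∘ₗ sandwich B = sandwich (A * B) := by
  ext1 ρ
  simp [sandwich_apply, Matrix.mul_assoc]

lemma choi_apply (Φ : Matrix (Fin n) (Fin n) ℂ →ₗ[ℂ] Matrix (Fin m) (Fin m) ℂ)
    (p q : Fin n × Fin m) :
    Choi Φ p q = Φ (Matrix.single p.1 q.1 1) p.2 q.2 := by
  simp [Choi, Matrix.sum_apply, Matrix.single_apply, ite_and]

lemma choi_add (Φ Ψ : Matrix (Fin n) (Fin n) ℂ →ₗ[ℂ] Matrix (Fin m) (Fin m) ℂ) :
    Choi (Φ + Ψ) = Choi Φ + Choi Ψ := by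
  ext p q
  simp [choi_apply]

lemma choi_smul (c : ℂ) (Φ : Matrix (Fin n) (Fin n) ℂ →ₗ[ℂ] Matrix (Fin m) (Fin m) ℂ) :
    Choi (c • Φ) = c • Choi Φ := by
  ext p q
  simp [choi_apply]

lemma choi_sandwich₂ (A B : Matrix (Fin m) (Fin n) ℂ) :
    Choi (sandwich₂ A B) = vecMulVec (_root_.vec A) (star (_root_.vec B)) := by
  ext p q
  simp [choi_apply, sandwich₂, Matrix.mul_apply, Matrix.single_apply, ite_and,
    vecMulVec_apply, _root_.vec]

lemma isCP_sandwich (A : Matrix (Fin n) (Fin n) ℂ) : IsCP (sandwich A) := by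
  rw [IsCP, sandwich, choi_sandwich₂]
  exact posSemidef_vecMulVec_self_star _

variable {Φ Ψ : Matrix (Fin n) (Fin n) ℂ →ₗ[ℂ] Matrix (Fin n) (Fin n) ℂ}

lemma IsCP.add (hΦ : IsCP Φ) (hΨ : IsCP Ψ) : IsCP (Φ + Ψ) := by
  rw [IsCP, choi_add]
  exact Matrix.PosSemidef.add hΦ hΨ

lemma IsCP.smul {c : ℂ} (hc : 0 ≤ c) (hΦ : IsCP Φ) : IsCP (c • Φ) := by
  rw [IsCP, choi_smul]
  exact Matrix.PosSemidef.smul hΦ hc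

lemma IsTP.comp (hΦ : IsTP Φ) (hΨ : IsTP Ψ) : IsTP (Φ ∘ₗ Ψ) := fun ρ =>
  (hΦ (Ψ ρ)).trans (hΨ ρ)

end CompletelyPositive

section KrausMap

variable {m n : ℕ} {ι : Type*} [Fintype ι]

/-- The map `ρ ↦ ∑ⱼₖ Gⱼₖ Kⱼ ρ Kₖ†` with coefficient matrix `G` in the family `K`. Taking `G = 1`
gives the map with Kraus operators `K`, and a positive semidefinite `G` gives a completely positive
map whose Kraus operators lie in the span of `K`. -/
def krausMap (K : ι → Matrix (Fin m) (Fin n) ℂ) (G : Matrix ι ι ℂ) :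
    Matrix (Fin n) (Fin n) ℂ →ₗ[ℂ] Matrix (Fin m) (Fin m) ℂ :=
  ∑ j, ∑ k, G j k • sandwich₂ (K j) (K k)

lemma krausMap_apply (K : ι → Matrix (Fin m) (Fin n) ℂ) (G : Matrix ι ι ℂ)
    (ρ : Matrix (Fin n) (Fin n) ℂ) :
    krausMap K G ρ = ∑ j, ∑ k, G j k • (K j * ρ * (K k)ᴴ) := by
  simp [krausMap, sandwich₂]

lemma krausMap_one_apply [DecidableEq ι] (K : ι → Matrix (Fin m) (Fin n) ℂ)
    (ρ : Matrix (Fin n) (Fin n) ℂ) : krausMap K 1 ρ = ∑ j, K j * ρ * (K j)ᴴ := by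
  simp [krausMap_apply, Matrix.one_apply]

lemma krausMap_add (K : ι → Matrix (Fin m) (Fin n) ℂ) (G H : Matrix ι ι ℂ) :
    krausMap K (G + H) = krausMap K G + krausMap K H := by
  simp only [krausMap, Matrix.add_apply, add_smul, Finset.sum_add_distrib]

lemma krausMap_smul (K : ι → Matrix (Fin m) (Fin n) ℂ) (c : ℂ) (G : Matrix ι ι ℂ) :
    krausMap K (c • G) = c • krausMap K G := by
  simp only [krausMap, Matrix.smul_apply, smul_assoc, Finset.smul_sum]

lemma choi_krausMap (K : ι → Matrix (Fin m) (Fin n) ℂ) (G : Matrix ι ι ℂ) :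
    Choi (krausMap K G) =
      (Matrix.of fun p j => _root_.vec (K j) p) * G *
        (Matrix.of fun p j => _root_.vec (K j) p)ᴴ := by
  ext p q
  have hentry (j k : ι) : (K j * Matrix.single p.1 q.1 (1 : ℂ) * (K k)ᴴ) p.2 q.2 =
      _root_.vec (K j) p * star (_root_.vec (K k) q) := by
    rw [← Pi.star_apply, ← vecMulVec_apply, ← choi_sandwich₂, choi_apply]
    rfl
  simp only [choi_apply, krausMap_apply, Matrix.sum_apply, Matrix.smul_apply, hentry]
  simp only [Matrix.mul_apply, Matrix.of_apply, conjTranspose_apply, Finset.sum_mul, smul_eq_mul]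
  rw [Finset.sum_comm]
  exact Finset.sum_congr rfl fun k _ => Finset.sum_congr rfl fun j _ => by ring

lemma isCP_krausMap (K : ι → Matrix (Fin n) (Fin n) ℂ) {G : Matrix ι ι ℂ} (hG : G.PosSemidef) :
    IsCP (krausMap K G) := by
  rw [IsCP, choi_krausMap]
  exact hG.mul_mul_conjTranspose_same _

lemma krausMap_comp_sandwich {K : ι → Matrix (Fin m) (Fin n) ℂ}
    {C : Matrix (Fin n) (Fin n) ℂ} {A : Matrix ι ι ℂ} (hA : ∀ j, K j * C = ∑ k, A k j • K k)
    (G : Matrix ι ι ℂ) :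
    krausMap K G ∘ₗ sandwich C = krausMap K (A * G * Aᴴ) := by
  ext1 ρ
  have hterm (i j : ι) : K i * (C * ρ * Cᴴ) * (K j)ᴴ =
      ∑ q : ι × ι, (A q.1 i * star (A q.2 j)) • (K q.1 * ρ * (K q.2)ᴴ) := by
    calc K i * (C * ρ * Cᴴ) * (K j)ᴴ = (K i * C) * ρ * (K j * C)ᴴ := by
          simp only [conjTranspose_mul, Matrix.mul_assoc]
      _ = _ := by
          simp only [hA, conjTranspose_sum, conjTranspose_smul, Matrix.sum_mul, Matrix.mul_sum,
            Matrix.smul_mul, Matrix.mul_smul, Finset.smul_sum, smul_smul,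
            Fintype.sum_prod_type_right, mul_comm]
  have hcoeff (k l : ι) :
      (A * G * Aᴴ) k l = ∑ p : ι × ι, G p.1 p.2 * (A k p.1 * star (A l p.2)) := by
    simp only [Matrix.mul_apply, conjTranspose_apply, Finset.sum_mul, Fintype.sum_prod_type_right]
    exact Finset.sum_congr rfl fun i _ => Finset.sum_congr rfl fun j _ => by ring
  simp only [LinearMap.comp_apply, sandwich_apply, krausMap_apply, hterm, hcoeff, Finset.smul_sum,
    Finset.sum_smul, smul_smul]
  rw [← Fintype.sum_prod_type', Finset.sum_comm, Fintype.sum_prod_type]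

end KrausMap

section KrausSpan

variable {m n : ℕ} {ι : Type*}

lemma mem_span_range_of_trace_eq_zero {K : ι → Matrix (Fin n) (Fin n) ℂ}
    {Y : Matrix (Fin n) (Fin n) ℂ}
    (h : ∀ Z : Matrix (Fin n) (Fin n) ℂ, (∀ j, ((K j)ᴴ * Z).trace = 0) → (Yᴴ * Z).trace = 0) :
    Y ∈ Submodule.span ℂ (Set.range K) := by
  let _ := toMatrixNormedAddCommGroup (1 : Matrix (Fin n) (Fin n) ℂ) .one
  let _ := toMatrixInnerProductSpace (1 : Matrix (Fin n) (Fin n) ℂ) .one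
  have hinner (A B : Matrix (Fin n) (Fin n) ℂ) : inner ℂ A B = (Aᴴ * B).trace := by
    rw [trace_mul_comm]
    exact congrArg (fun C => (C * Aᴴ).trace) (mul_one B)
  rw [← (Submodule.span ℂ (Set.range K)).orthogonal_orthogonal, Submodule.mem_orthogonal']
  intro Z hZ
  rw [hinner]
  refine h Z fun j => ?_
  rw [← hinner]
  exact hZ (K j) (Submodule.subset_span ⟨j, rfl⟩)

lemma krausMap_one_vecMulVec_self_star [Fintype ι] [DecidableEq ι]
    (K : ι → Matrix (Fin m) (Fin n) ℂ) (y : Fin n → ℂ) :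
    krausMap K 1 (vecMulVec y (star y)) =
      (Matrix.of fun i j => (K j *ᵥ y) i) * (Matrix.of fun i j => (K j *ᵥ y) i)ᴴ := by
  have hterm (j : ι) : K j * vecMulVec y (star y) * (K j)ᴴ =
      vecMulVec (K j *ᵥ y) (star (K j *ᵥ y)) := by
    rw [mul_vecMulVec, vecMulVec_mul, star_mulVec]
  ext i k
  simp only [krausMap_one_apply, hterm, Matrix.sum_apply, vecMulVec_apply, Matrix.mul_apply,
    Matrix.of_apply, conjTranspose_apply, Pi.star_apply]

lemma star_mulVec_dotProduct_eq_zero_of_krausMap [Fintype ι] [DecidableEq ι]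
    {K : ι → Matrix (Fin m) (Fin n) ℂ} {y : Fin n → ℂ} {w : Fin m → ℂ}
    (h : krausMap K 1 (vecMulVec y (star y)) *ᵥ w = 0) (j : ι) : star (K j *ᵥ y) ⬝ᵥ w = 0 := by
  rw [krausMap_one_vecMulVec_self_star, self_mul_conjTranspose_mulVec_eq_zero] at h
  exact congrFun h j

lemma exists_mul_vecMulVec_eq_sum_smul [Fintype ι] [DecidableEq ι]
    {K : ι → Matrix (Fin n) (Fin n) ℂ} {x y : Fin n → ℂ}
    (h : ∀ Z : Matrix (Fin n) (Fin n) ℂ, (∀ j, ((K j)ᴴ * Z).trace = 0) →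
      (krausMap K 1 (vecMulVec y (star y)) * Z) *ᵥ x = 0) :
    ∃ A : Matrix ι ι ℂ, ∀ j, K j * vecMulVec y (star x) = ∑ k, A k j • K k := by
  have hmem (j : ι) : K j * vecMulVec y (star x) ∈ Submodule.span ℂ (Set.range K) := by
    refine mem_span_range_of_trace_eq_zero fun Z hZ => ?_
    have hperp : star (K j *ᵥ y) ⬝ᵥ (Z *ᵥ x) = 0 :=
      star_mulVec_dotProduct_eq_zero_of_krausMap (by rw [mulVec_mulVec, h Z hZ]) j
    rwa [mul_vecMulVec, conjTranspose_vecMulVec, star_star, vecMulVec_mul, trace_vecMulVec,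
      dotProduct_comm, ← dotProduct_mulVec]
  choose c hc using fun j => (Submodule.mem_span_range_iff_exists_fun ℂ).1 (hmem j)
  exact ⟨Matrix.of fun k j => c j k, fun j => (hc j).symm⟩

end KrausSpan

open scoped MatrixOrder Matrix.Norms.L2Operator in
lemma eventually_posSemidef_of_eq_one {ι X : Type*} [Finite ι] [DecidableEq ι]
    [TopologicalSpace X] {G : X → Matrix ι ι ℂ} {t : X} (hG : ContinuousAt G t) (ht : G t = 1)
    (hherm : ∀ s, (G s).IsHermitian) : ∀ᶠ s in 𝓝 t, (G s).PosSemidef := by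
  have := Fintype.ofFinite ι
  have hball : ∀ᶠ s in 𝓝 t, ‖1 - G s‖ < 1 :=
    (continuousAt_const.sub hG).norm.eventually_lt continuousAt_const (by simp [ht])
  filter_upwards [hball] with s hs
  have hsa : IsSelfAdjoint (1 - G s) := (IsSelfAdjoint.one _).sub (hherm s)
  rw [← nonneg_iff_posSemidef, ← sub_le_self_iff 1]
  calc 1 - G s ≤ algebraMap ℝ _ ‖1 - G s‖ := hsa.le_algebraMap_norm_self
    _ ≤ algebraMap ℝ _ 1 := algebraMap_mono _ hs.le
    _ = 1 := map_one _

section Damping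

variable {n : ℕ} {x y : Fin n → ℂ}

/-- The operator `1 + (a - 1) x x†`, which scales a unit vector `x` by `a` and fixes its
orthogonal complement. -/
def dampingOp (a : ℝ) (x : Fin n → ℂ) : Matrix (Fin n) (Fin n) ℂ :=
  1 + ((a : ℂ) - 1) • vecMulVec x (star x)

/-- The map `D_a ρ = E ρ E† + (1 - a²) (y x†) ρ (y x†)†` with `E = 1 + (a - 1) x x†`. For
orthonormal `x`, `y` it is the elementary channel `Psi (1 - a²) x y` when `0 ≤ a ≤ 1` and the
inverse of one when `1 ≤ a`; the amplitude `a`, rather than `λ = 1 - a²`, makes composition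
multiplicative in the parameter. -/
def damping (a : ℝ) (x y : Fin n → ℂ) :
    Matrix (Fin n) (Fin n) ℂ →ₗ[ℂ] Matrix (Fin n) (Fin n) ℂ :=
  sandwich (dampingOp a x) + (1 - (a : ℂ) ^ 2) • sandwich (vecMulVec y (star x))

lemma dampingOp_one : dampingOp 1 x = 1 := by
  simp [dampingOp]

lemma conjTranspose_dampingOp (a : ℝ) : (dampingOp a x)ᴴ = dampingOp a x := by
  simp [dampingOp, conjTranspose_vecMulVec]

lemma dampingOp_mul_dampingOp (hx : star x ⬝ᵥ x = 1) (a b : ℝ) :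
    dampingOp a x * dampingOp b x = dampingOp (a * b) x := by
  simp only [dampingOp, mul_add, add_mul, one_mul, mul_one, smul_mul_assoc, mul_smul_comm,
    vecMulVec_mul_vecMulVec, hx, one_smul]
  push_cast
  module

lemma dampingOp_mul_vecMulVec (hxy : star x ⬝ᵥ y = 0) (a : ℝ) (v : Fin n → ℂ) :
    dampingOp a x * vecMulVec y v = vecMulVec y v := by
  simp [dampingOp, add_mul, vecMulVec_mul_vecMulVec, hxy]

lemma vecMulVec_mul_dampingOp (hx : star x ⬝ᵥ x = 1) (a : ℝ) (v : Fin n → ℂ) :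
    vecMulVec v (star x) * dampingOp a x = (a : ℂ) • vecMulVec v (star x) := by
  simp only [dampingOp, mul_add, mul_one, mul_smul_comm, vecMulVec_mul_vecMulVec, hx, one_smul]
  module

lemma damping_one : damping 1 x y = LinearMap.id := by
  simp [damping, dampingOp_one, sandwich_one]

lemma damping_comp_damping (hx : star x ⬝ᵥ x = 1) (hxy : star x ⬝ᵥ y = 0) (a b : ℝ) :
    damping a x y ∘ₗ damping b x y = damping (a * b) x y := by
  have hsq : vecMulVec y (star x) * vecMulVec y (star x) = 0 := by
    simp [vecMulVec_mul_vecMulVec, hxy]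
  simp only [damping, LinearMap.add_comp, LinearMap.comp_add, LinearMap.smul_comp,
    LinearMap.comp_smul, sandwich_comp, dampingOp_mul_dampingOp hx, dampingOp_mul_vecMulVec hxy,
    vecMulVec_mul_dampingOp hx, hsq, sandwich_smul, sandwich_zero, Complex.star_def,
    Complex.conj_ofReal]
  push_cast
  module

lemma isCP_damping {a : ℝ} (ha : a ^ 2 ≤ 1) : IsCP (damping a x y) :=
  (isCP_sandwich _).add ((isCP_sandwich _).smul (sub_nonneg.2 (mod_cast ha)))

lemma isTP_damping (hx : star x ⬝ᵥ x = 1) (hy : star y ⬝ᵥ y = 1) (a : ℝ) :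
    IsTP (damping a x y) := by
  intro ρ
  have hkraus : dampingOp (a * a) x + (1 - (a : ℂ) ^ 2) • vecMulVec x (star x) = 1 := by
    rw [dampingOp]
    push_cast
    module
  calc (damping a x y ρ).trace
      = ((dampingOp (a * a) x + (1 - (a : ℂ) ^ 2) • vecMulVec x (star x)) * ρ).trace := by
        simp only [damping, LinearMap.add_apply, LinearMap.smul_apply, sandwich_apply, trace_add,
          trace_smul, add_mul, smul_mul_assoc]
        rw [trace_mul_cycle, trace_mul_cycle (vecMulVec y (star x)), conjTranspose_dampingOp,
          dampingOp_mul_dampingOp hx, conjTranspose_vecMulVec, star_star, vecMulVec_mul_vecMulVec,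
          hy, one_smul]
    _ = ρ.trace := by rw [hkraus, one_mul]

lemma damping_apply_one (hx : star x ⬝ᵥ x = 1) (a : ℝ) :
    damping a x y 1 = dampingOp (a * a) x + (1 - (a : ℂ) ^ 2) • vecMulVec y (star y) := by
  simp only [damping, LinearMap.add_apply, LinearMap.smul_apply, sandwich_apply, mul_one,
    conjTranspose_dampingOp, dampingOp_mul_dampingOp hx, conjTranspose_vecMulVec, star_star,
    vecMulVec_mul_vecMulVec, hx, one_smul]

lemma damping_apply_one_mulVec (hx : star x ⬝ᵥ x = 1) (hxy : star x ⬝ᵥ y = 0) (a : ℝ) :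
    damping a x y 1 *ᵥ x = (a : ℂ) ^ 2 • x := by
  have hyx : star y ⬝ᵥ x = 0 := by rw [star_dotProduct, hxy, star_zero]
  simp only [damping_apply_one hx, dampingOp, add_mulVec, one_mulVec, smul_mulVec,
    vecMulVec_mulVec, hx, hyx, MulOpposite.op_one, MulOpposite.op_zero, one_smul, zero_smul]
  push_cast
  module

lemma krausMap_comp_damping {ι : Type*} [Fintype ι] [DecidableEq ι]
    {K : ι → Matrix (Fin n) (Fin n) ℂ} {A B : Matrix ι ι ℂ}
    (hA : ∀ j, K j * vecMulVec x (star x) = ∑ k, A k j • K k)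
    (hB : ∀ j, K j * vecMulVec y (star x) = ∑ k, B k j • K k) (G : Matrix ι ι ℂ) (a : ℝ) :
    krausMap K G ∘ₗ damping a x y =
      krausMap K ((1 + ((a : ℂ) - 1) • A) * G * (1 + ((a : ℂ) - 1) • A)ᴴ +
        (1 - (a : ℂ) ^ 2) • (B * G * Bᴴ)) := by
  have hop (j : ι) : K j * dampingOp a x = ∑ k, (1 + ((a : ℂ) - 1) • A) k j • K k := by
    simp [dampingOp, mul_add, hA, add_smul, Finset.sum_add_distrib, Finset.smul_sum, smul_smul,
      Matrix.one_apply]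
  rw [damping, LinearMap.comp_add, LinearMap.comp_smul, krausMap_comp_sandwich hop,
    krausMap_comp_sandwich hB, krausMap_add, krausMap_smul]

lemma eventually_isCP_krausMap_comp_damping {ι : Type*} [Fintype ι] [DecidableEq ι]
    {K : ι → Matrix (Fin n) (Fin n) ℂ} {A B : Matrix ι ι ℂ}
    (hA : ∀ j, K j * vecMulVec x (star x) = ∑ k, A k j • K k)
    (hB : ∀ j, K j * vecMulVec y (star x) = ∑ k, B k j • K k) :
    ∀ᶠ a in 𝓝 (1 : ℝ), IsCP (krausMap K 1 ∘ₗ damping a x y) := by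
  simp only [krausMap_comp_damping hA hB, mul_one]
  refine (eventually_posSemidef_of_eq_one ?_ ?_ fun a => ?_).mono fun a => isCP_krausMap K
  · fun_prop
  · simp
  · refine (isHermitian_mul_conjTranspose_self _).add ?_
    simp [IsHermitian]

end Damping

section UnitaryConj

variable {n : ℕ} {Φ : Matrix (Fin n) (Fin n) ℂ →ₗ[ℂ] Matrix (Fin n) (Fin n) ℂ} {x y : Fin n → ℂ}

lemma IsUnitaryConj.map_one (hΦ : IsUnitaryConj Φ) : Φ 1 = 1 := by
  obtain ⟨U, hU, hΦU⟩ := hΦ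
  rw [hΦU, mul_one]
  exact mem_unitaryGroup_iff.1 hU

lemma IsUnitaryConj.injective (hΦ : IsUnitaryConj Φ) : Function.Injective Φ := by
  obtain ⟨U, hU, hΦU⟩ := hΦ
  have hUU : Uᴴ * U = 1 := mem_unitaryGroup_iff'.1 hU
  refine Function.LeftInverse.injective (g := sandwich Uᴴ) fun ρ => ?_
  rw [show Φ = sandwich U from LinearMap.ext hΦU, ← LinearMap.comp_apply, sandwich_comp, hUU,
    sandwich_one, LinearMap.id_apply]

lemma sq_eq_one_of_damping_apply_one (hx : star x ⬝ᵥ x = 1) (hxy : star x ⬝ᵥ y = 0) {a : ℝ}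
    (h : damping a x y 1 = 1) : a ^ 2 = 1 := by
  have hax : star x ⬝ᵥ ((a : ℂ) ^ 2 • x) = star x ⬝ᵥ x := by
    rw [← damping_apply_one_mulVec hx hxy, h, one_mulVec]
  rw [dotProduct_smul, hx, smul_eq_mul, mul_one] at hax
  exact_mod_cast hax

lemma not_isUnitaryConj_damping (hx : star x ⬝ᵥ x = 1) (hxy : star x ⬝ᵥ y = 0) {a : ℝ}
    (ha : a ^ 2 ≠ 1) : ¬ IsUnitaryConj (damping a x y) := fun h =>
  ha (sq_eq_one_of_damping_apply_one hx hxy h.map_one)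

lemma IsUnitaryConj.not_comp_damping (hΦ : IsUnitaryConj Φ) (hx : star x ⬝ᵥ x = 1)
    (hxy : star x ⬝ᵥ y = 0) {a : ℝ} (ha : a ^ 2 ≠ 1) :
    ¬ IsUnitaryConj (Φ ∘ₗ damping a x y) := fun h =>
  ha (sq_eq_one_of_damping_apply_one hx hxy (hΦ.injective (h.map_one.trans hΦ.map_one.symm)))

end UnitaryConj

section Divisible

variable {n : ℕ} {Φ : Matrix (Fin n) (Fin n) ℂ →ₗ[ℂ] Matrix (Fin n) (Fin n) ℂ} {x y : Fin n → ℂ}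

lemma divisible_of_comp_damping (hx : star x ⬝ᵥ x = 1) (hy : star y ⬝ᵥ y = 1)
    (hxy : star x ⬝ᵥ y = 0) (hΦ : IsTP Φ) {a : ℝ} (ha : 1 < a)
    (hCP : IsCP (Φ ∘ₗ damping a x y)) (hunit : ¬ IsUnitaryConj (Φ ∘ₗ damping a x y)) :
    Divisible Φ := by
  have hinv : a⁻¹ ^ 2 < 1 := pow_lt_one₀ (by positivity) (inv_lt_one_of_one_lt₀ ha) two_ne_zero
  refine ⟨Φ ∘ₗ damping a x y, damping a⁻¹ x y, ⟨hCP, hΦ.comp (isTP_damping hx hy a)⟩,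
    ⟨isCP_damping hinv.le, isTP_damping hx hy a⁻¹⟩, ?_, hunit,
    not_isUnitaryConj_damping hx hxy hinv.ne⟩
  rw [LinearMap.comp_assoc, damping_comp_damping hx hxy, mul_inv_cancel₀ (by positivity),
    damping_one, LinearMap.comp_id]

lemma divisible_of_eventually_isCP_comp_damping (hx : star x ⬝ᵥ x = 1) (hy : star y ⬝ᵥ y = 1)
    (hxy : star x ⬝ᵥ y = 0) (hΦ : IsTP Φ)
    (hCP : ∀ᶠ a in 𝓝[>] (1 : ℝ), IsCP (Φ ∘ₗ damping a x y)) : Divisible Φ := by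
  obtain ⟨b, ⟨hb, hb1⟩⟩ := (hCP.and self_mem_nhdsWithin).exists
  obtain ⟨a, ⟨ha, ha1, hab⟩⟩ := (hCP.and (Ioo_mem_nhdsGT hb1)).exists
  by_cases hunit : IsUnitaryConj (Φ ∘ₗ damping a x y)
  · -- Then `Φ ∘ D_b = (Φ ∘ D_a) ∘ D_{b / a}` is not a unitary conjugation, so use `b` instead.
    have hba : (b / a) ^ 2 ≠ 1 :=
      (one_lt_pow₀ ((one_lt_div (by linarith)).2 hab) two_ne_zero).ne'
    have hunit_b := hunit.not_comp_damping hx hxy hba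
    rw [LinearMap.comp_assoc, damping_comp_damping hx hxy,
      mul_div_cancel₀ _ (by linarith)] at hunit_b
    exact divisible_of_comp_damping hx hy hxy hΦ hb1 hb hunit_b
  · exact divisible_of_comp_damping hx hy hxy hΦ ha1 ha hunit

end Divisible

/-- sufficient criterion for divisibility. -/
theorem sufficient_criterion_divisible (n r : ℕ) (K : Fin r → Matrix (Fin n) (Fin n) ℂ)
    (Φ : Matrix (Fin n) (Fin n) ℂ →ₗ[ℂ] Matrix (Fin n) (Fin n) ℂ)
    (hKraus : ∀ ρ, Φ ρ = ∑ j, K j * ρ * (K j)ᴴ) (hΦ : IsChannel Φ)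
    (x xp : Fin n → ℂ)
    (hx : star x ⬝ᵥ x = 1) (hxp : star xp ⬝ᵥ xp = 1) (horth : star x ⬝ᵥ xp = 0)
    (hcond : ∀ Z : Matrix (Fin n) (Fin n) ℂ, (∀ j, ((K j)ᴴ * Z).trace = 0) →
      (Φ (Matrix.vecMulVec xp (star xp)) * Z) *ᵥ x = 0 ∧
      (Φ (Matrix.vecMulVec x (star x)) * Z) *ᵥ x = 0) :
    Divisible Φ := by
  obtain rfl : Φ = krausMap K 1 := LinearMap.ext fun ρ => by rw [hKraus, krausMap_one_apply]
  obtain ⟨A, hA⟩ := exists_mul_vecMulVec_eq_sum_smul fun Z hZ => (hcond Z hZ).2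
  obtain ⟨B, hB⟩ := exists_mul_vecMulVec_eq_sum_smul fun Z hZ => (hcond Z hZ).1
  have hCP : ∀ᶠ a in 𝓝[>] (1 : ℝ), IsCP (krausMap K 1 ∘ₗ damping a x xp) :=
    (eventually_isCP_krausMap_comp_damping hA hB).filter_mono nhdsWithin_le_nhds
  exact divisible_of_eventually_isCP_comp_damping hx hxp horth hΦ.2 hCP

end
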